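/- arXiv:2003.02030 — 3 statements merged into one kernel-verified Lean document; each statement's English description precedes it below -/
import Mathlib

section
/- Let X and Y be compact metric spaces equipped with their Borel σ-algebras, ν a Borel probability measure on X with supp(ν) = X, and π a Borel probability measure on X × Y. Then H^ν(π) = −sup{∫ f dπ : f : X × Y → ℝ Lipschitz with ∫ e^{f(x,y)} dν(x) = 1 for every y ∈ Y}; that is, in the definition of H^ν(π) the supremum over measurable ν-normalized functions may be replaced by the supremum over Lipschitz ν-normalized functions. -/
open MeasureTheory ENNReal ProbabilityTheory

noncomputable section
open scoped Classical

/-- The extended-real integral `∫ f⁺ dμ − ∫ f⁻ dμ`, valued in `EReal`. -/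
def eInt {α : Type*} [MeasurableSpace α] (μ : Measure α) (f : α → ℝ) : EReal :=
  ((∫⁻ x, ENNReal.ofReal (f x) ∂μ : ℝ≥0∞) : EReal)
    - ((∫⁻ x, ENNReal.ofReal (-f x) ∂μ : ℝ≥0∞) : EReal)

/-- The extended integral of `f` with respect to `μ` is well defined (not `+∞ − ∞`). -/
def IntWellDef {α : Type*} [MeasurableSpace α] (μ : Measure α) (f : α → ℝ) : Prop :=
  (∫⁻ x, ENNReal.ofReal (f x) ∂μ ≠ ⊤) ∨ (∫⁻ x, ENNReal.ofReal (-f x) ∂μ ≠ ⊤)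

/-- Kullback–Leibler divergence `D_KL(μ | ν) = ∫ log (dμ/dν) dμ` if `μ ≪ ν`, `+∞` otherwise. -/
def KL {α : Type*} [MeasurableSpace α] (μ ν : Measure α) : EReal :=
  if μ ≪ ν then eInt μ (fun x => Real.log ((μ.rnDeriv ν x).toReal)) else ⊤

/-- `S^ν(P) = −sup{∫ c dP : c measurable, ∫ e^c dν = 1, ∫ c dP well defined}`. -/
def SEnt {X : Type*} [MeasurableSpace X] (ν P : Measure X) : EReal :=
  - sSup { r : EReal | ∃ c : X → ℝ, Measurable c ∧ (∫ x, Real.exp (c x) ∂ν) = 1 ∧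
      IntWellDef P c ∧ r = eInt P c }

/-- `H^{ν̂}(π)`: entropy of `π` relative to the probability kernel `ν̂ = κ`, i.e. minus the
supremum of `∫ c dπ` over `κ`-normalized measurable functions with well-defined integral. -/
def Hker {X Y : Type*} [MeasurableSpace X] [MeasurableSpace Y]
    (κ : Kernel Y X) (π : Measure (X × Y)) : EReal :=
  - sSup { r : EReal | ∃ c : X × Y → ℝ, Measurable c ∧
      (∀ y, (∫ x, Real.exp (c (x, y)) ∂(κ y)) = 1) ∧ IntWellDef π c ∧ r = eInt π c }

/-- `H^ν(π)`: entropy of `π` relative to an a priori probability `ν` on `X`. -/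
def Hnu {X Y : Type*} [MeasurableSpace X] [MeasurableSpace Y]
    (ν : Measure X) (π : Measure (X × Y)) : EReal :=
  - sSup { r : EReal | ∃ c : X × Y → ℝ, Measurable c ∧
      (∀ y, (∫ x, Real.exp (c (x, y)) ∂ν) = 1) ∧ IntWellDef π c ∧ r = eInt π c }

/-- The probability `ν̂ dQ` on `X × Y`, defined by
`∫ f d(ν̂ dQ) = ∫_Y ∫_X f(x,y) dν̂^y(x) dQ(y)`. -/
def kernMeas {X Y : Type*} [MeasurableSpace X] [MeasurableSpace Y]
    (κ : Kernel Y X) (Q : Measure Y) : Measure (X × Y) :=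
  (Q.compProd κ).map Prod.swap

/-!
The log-partition function `y ↦ log ∫ e^{g(x,y)} dν(x)` of a bounded Lipschitz `g` is again
Lipschitz, so subtracting it makes `g` normalized without leaving the Lipschitz class. A bounded
measurable `g` is a uniformly bounded limit of Lipschitz functions, almost everywhere for
`π + ν ⊗ π_Y`: the first summand controls `∫ g dπ`, the second one the log-partition functions, so
by dominated convergence the integrals of the normalizations converge. Finally, the truncation of a
normalized measurable `c` at the levels `±n` has log-partition function at most `e^{-n}`, so
normalizing it costs at most `e^{-n} π(X × Y)`, and the integrals of the truncations converge to
that of `c`.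
-/

open Filter Topology

section Truncation

/-- The truncation of the real number `a` at the levels `±M`; it lies in `[-M, M]` if `0 ≤ M`. -/
def truncate (M a : ℝ) : ℝ := max (-M) (min M a)

variable {M a : ℝ}

lemma abs_truncate_le (hM : 0 ≤ M) : |truncate M a| ≤ M :=
  abs_le.2 ⟨le_max_left _ _, max_le (by linarith) (min_le_left _ _)⟩

lemma truncate_eq_self (ha : |a| ≤ M) : truncate M a = a := by
  rw [truncate, min_eq_right (abs_le.1 ha).2, max_eq_right (abs_le.1 ha).1]

lemma lipschitzWith_truncate (M : ℝ) : LipschitzWith 1 (truncate M) :=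
  (LipschitzWith.id.const_min M).const_max (-M)

lemma measurable_truncate (M : ℝ) : Measurable (truncate M) :=
  (lipschitzWith_truncate M).continuous.measurable

lemma truncate_neg (hM : 0 ≤ M) : truncate M (-a) = -truncate M a := by
  simp only [truncate, max_def, min_def]
  split_ifs <;> linarith

lemma ofReal_truncate (hM : 0 ≤ M) :
    ENNReal.ofReal (truncate M a) = min (ENNReal.ofReal M) (ENNReal.ofReal a) := by
  rw [truncate, ENNReal.ofReal_max, ENNReal.ofReal_min,
    ENNReal.ofReal_of_nonpos (neg_nonpos.2 hM), zero_max]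

lemma exp_truncate_le : Real.exp (truncate M a) ≤ Real.exp a + Real.exp (-M) := by
  rw [truncate, Real.exp_monotone.map_max, max_le_iff]
  have : Real.exp (min M a) ≤ Real.exp a := Real.exp_le_exp.2 (min_le_right _ _)
  constructor <;> linarith [Real.exp_pos a, Real.exp_pos (-M)]

end Truncation

section ExtendedIntegral

variable {α : Type*} [MeasurableSpace α] {μ : Measure α} {f : α → ℝ}

lemma integrable_of_abs_le [IsFiniteMeasure μ] (hf : AEStronglyMeasurable f μ) {M : ℝ}
    (hM : ∀ x, |f x| ≤ M) : Integrable f μ :=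
  Integrable.of_bound hf M (Eventually.of_forall hM)

lemma eInt_eq_integral (hf : Integrable f μ) : eInt μ f = ((∫ x, f x ∂μ : ℝ) : EReal) := by
  rw [integral_eq_lintegral_pos_part_sub_lintegral_neg_part hf, EReal.coe_sub,
    EReal.coe_ennreal_toReal hf.lintegral_lt_top.ne,
    EReal.coe_ennreal_toReal (hf.neg.lintegral_lt_top (f := fun x ↦ -f x)).ne, eInt]

lemma tendsto_lintegral_ofReal_truncate (hf : AEMeasurable f μ) :
    Tendsto (fun n : ℕ ↦ ∫⁻ x, ENNReal.ofReal (truncate n (f x)) ∂μ) atTop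
      (𝓝 (∫⁻ x, ENNReal.ofReal (f x) ∂μ)) := by
  refine lintegral_tendsto_of_tendsto_of_monotone
    (fun n ↦ ((measurable_truncate n).comp_aemeasurable hf).ennreal_ofReal)
    (Eventually.of_forall fun x m n hmn ↦ ?_) (Eventually.of_forall fun x ↦ ?_)
  · simp only [ofReal_truncate (Nat.cast_nonneg _), ENNReal.ofReal_natCast]
    gcongr
  · obtain ⟨n₀, hn₀⟩ := exists_nat_ge |f x|
    refine tendsto_const_nhds.congr' ?_
    filter_upwards [eventually_ge_atTop n₀] with n hn
    rw [truncate_eq_self (hn₀.trans (Nat.cast_le.2 hn))]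

lemma tendsto_eInt_truncate (hf : AEMeasurable f μ) (hwd : IntWellDef μ f) :
    Tendsto (fun n : ℕ ↦ eInt μ fun x ↦ truncate n (f x)) atTop (𝓝 (eInt μ f)) := by
  have hpos := (continuous_coe_ennreal_ereal.tendsto _).comp (tendsto_lintegral_ofReal_truncate hf)
  have hneg := (continuous_coe_ennreal_ereal.tendsto _).comp
    (tendsto_lintegral_ofReal_truncate hf.neg)
  simp only [eInt, sub_eq_add_neg, ← truncate_neg (Nat.cast_nonneg _)]
  refine (EReal.continuousAt_add ?_ ?_).tendsto.comp
    (hpos.prodMk_nhds ((continuous_neg.tendsto _).comp hneg))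
  · simpa [IntWellDef] using hwd
  · simp

end ExtendedIntegral

section Density

variable {Z : Type*} [PseudoEMetricSpace Z]

lemma abs_thickenedIndicator_sub_indicator_le {δ : ℝ} (hδ : 0 < δ) {F s : Set Z} (hFs : F ⊆ s)
    (z : Z) :
    |(thickenedIndicator hδ F z : ℝ) - s.indicator 1 z|
      ≤ ((s ∪ Metric.thickening δ F) \ F).indicator 1 z := by
  by_cases hzF : z ∈ F
  · simp [thickenedIndicator_one hδ F hzF, hFs hzF, hzF]
  by_cases hz : z ∈ s ∪ Metric.thickening δ F
  · rw [Set.indicator_of_mem (Set.mem_sdiff_of_mem hz hzF), Pi.one_apply]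
    exact abs_sub_le_of_nonneg_of_le (NNReal.coe_nonneg _)
      (mod_cast thickenedIndicator_le_one hδ F z)
      (Set.indicator_nonneg (fun _ _ ↦ zero_le_one) z)
      (Set.indicator_le_self' (fun _ _ ↦ zero_le_one) z)
  · rw [Set.mem_union, not_or] at hz
    simp [thickenedIndicator_zero hδ F hz.2, hz.1, hz.2]

variable [MeasurableSpace Z] {μ : Measure Z} [IsFiniteMeasure μ]

lemma exists_measure_thickening_sdiff_le [OpensMeasurableSpace Z] {F : Set Z} (hF : IsClosed F)
    {ε : ℝ≥0∞} (hε : ε ≠ 0) : ∃ δ > 0, μ (Metric.thickening δ F \ F) ≤ ε := by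
  have hlim : Tendsto (fun δ ↦ μ (Metric.thickening δ F)) (𝓝[>] 0) (𝓝 (μ F)) :=
    tendsto_measure_thickening_of_isClosed ⟨1, one_pos, measure_ne_top _ _⟩ hF
  obtain ⟨δ, hδ, hδF⟩ := ((hlim.eventually_lt_const
    (ENNReal.lt_add_right (measure_ne_top μ F) hε)).and self_mem_nhdsWithin).exists
  refine ⟨δ, hδF, ?_⟩
  rw [measure_sdiff (Metric.self_subset_thickening hδF F) hF.measurableSet.nullMeasurableSet
    (measure_ne_top μ F)]
  exact tsub_le_iff_left.2 hδ.le

variable [BorelSpace Z]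

section Lp

variable {E : Type*} [NormedAddCommGroup E] [NormedSpace ℝ E] {p : ℝ≥0∞}

lemma exists_lipschitzWith_eLpNorm_indicator_sub_le (hp : p ≠ ∞) (c : E) {s : Set Z}
    (hs : MeasurableSet s) {ε : ℝ≥0∞} (hε : ε ≠ 0) :
    ∃ g : Z → E, eLpNorm (g - s.indicator fun _ ↦ c) p μ ≤ ε ∧
      (∃ K, LipschitzWith K g) ∧ AEStronglyMeasurable g μ := by
  obtain ⟨η, hη, hηε⟩ := exists_eLpNorm_indicator_le (μ := μ) hp c hε
  have hη2 : (η / 2 : ℝ≥0∞) ≠ 0 := by simpa using hη.ne'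
  obtain ⟨F, hFs, hF, hsF⟩ := hs.exists_isClosed_sdiff_lt (measure_ne_top μ s) hη2
  obtain ⟨δ, hδ, hδF⟩ := exists_measure_thickening_sdiff_le (μ := μ) hF hη2
  let φ : Z → ℝ := fun z ↦ thickenedIndicator hδ F z
  have hφ : LipschitzWith δ.toNNReal⁻¹ φ := lipschitzWith_thickenedIndicator hδ F
  refine ⟨fun z ↦ φ z • c, ?_,
    ⟨_, ((ContinuousLinearMap.toSpanSingleton ℝ c).lipschitz.comp hφ)⟩,
    hφ.continuous.aestronglyMeasurable.smul_const c⟩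
  let D : Set Z := (s ∪ Metric.thickening δ F) \ F
  have hD : μ D ≤ η := calc
    μ D = μ (s \ F ∪ Metric.thickening δ F \ F) := by rw [← Set.union_sdiff_distrib]
    _ ≤ η / 2 + η / 2 := (measure_union_le _ _).trans (add_le_add hsF.le hδF)
    _ = η := ENNReal.add_halves _
  refine (eLpNorm_mono fun z ↦ ?_).trans (hηε D hD)
  have hindicator (A : Set Z) : A.indicator (fun _ ↦ c) z = A.indicator (1 : Z → ℝ) z • c := by
    by_cases hz : z ∈ A <;> simp [hz]
  calc ‖φ z • c - s.indicator (fun _ ↦ c) z‖ = |φ z - s.indicator 1 z| * ‖c‖ := by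
        rw [hindicator, ← sub_smul, norm_smul, Real.norm_eq_abs]
    _ ≤ |D.indicator 1 z| * ‖c‖ := by
        gcongr ?_ * _
        exact (abs_thickenedIndicator_sub_indicator_le hδ hFs z).trans (le_abs_self _)
    _ = ‖D.indicator (fun _ ↦ c) z‖ := by rw [hindicator, norm_smul, Real.norm_eq_abs]

lemma exists_lipschitzWith_eLpNorm_sub_le (hp : p ≠ ∞) {f : Z → E} (hf : MemLp f p μ)
    {ε : ℝ≥0∞} (hε : ε ≠ 0) :
    ∃ g : Z → E, eLpNorm (f - g) p μ ≤ ε ∧ (∃ K, LipschitzWith K g) ∧ AEStronglyMeasurable g μ :=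
  hf.induction_dense hp _
    (fun c _ hs _ _ hε ↦ exists_lipschitzWith_eLpNorm_indicator_sub_le hp c hs hε)
    (fun _ _ ⟨⟨_, hf⟩, hf'⟩ ⟨⟨_, hg⟩, hg'⟩ ↦ ⟨⟨_, hf.add hg⟩, hf'.add hg'⟩) (fun _ hg ↦ hg.2) hε

end Lp

lemma exists_lipschitzWith_tendsto_ae {f : Z → ℝ} (hf : AEStronglyMeasurable f μ) {M : ℝ}
    (hM : ∀ z, |f z| ≤ M) :
    ∃ G : ℕ → Z → ℝ, (∀ n, ∃ K, LipschitzWith K (G n)) ∧ (∀ n z, |G n z| ≤ M) ∧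
      ∀ᵐ z ∂μ, Tendsto (fun n ↦ G n z) atTop (𝓝 (f z)) := by
  have hfp : MemLp f 1 μ := memLp_one_iff_integrable.2 (integrable_of_abs_le hf hM)
  choose G hGf hGL hGm using fun n : ℕ ↦ exists_lipschitzWith_eLpNorm_sub_le ENNReal.one_ne_top hfp
    (ε := (n : ℝ≥0∞)⁻¹) (by simp)
  have hlim : Tendsto (fun n ↦ eLpNorm (G n - f) 1 μ) atTop (𝓝 0) := by
    refine tendsto_of_tendsto_of_tendsto_of_le_of_le tendsto_const_nhds
      ENNReal.tendsto_inv_nat_nhds_zero (fun _ ↦ zero_le) fun n ↦ ?_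
    exact (eLpNorm_sub_comm _ _ _ _).trans_le (hGf n)
  obtain ⟨ns, -, hns⟩ :=
    (tendstoInMeasure_of_tendsto_eLpNorm one_ne_zero hGm hf hlim).exists_seq_tendsto_ae
  refine ⟨fun n z ↦ truncate M (G (ns n) z), fun n ↦ ?_, fun n z ↦ ?_, ?_⟩
  · obtain ⟨K, hK⟩ := hGL (ns n)
    exact ⟨_, (lipschitzWith_truncate M).comp hK⟩
  · exact abs_truncate_le ((abs_nonneg _).trans (hM z))
  · filter_upwards [hns] with z hz
    simpa only [truncate_eq_self (hM z), Function.comp_def] using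
      ((lipschitzWith_truncate M).continuous.tendsto (f z)).comp hz

end Density

section Normalization

variable {X Y : Type*} [MeasurableSpace X] {ν : Measure X} {g : X × Y → ℝ}

/-- A function on `X × Y` is `ν`-normalized if `∫ e^{f(x,y)} dν(x) = 1` for every `y`. -/
def IsNormalized (ν : Measure X) (f : X × Y → ℝ) : Prop :=
  ∀ y, ∫ x, Real.exp (f (x, y)) ∂ν = 1

/-- The log-partition function `y ↦ log ∫ e^{g(x,y)} dν(x)`; subtracting it from `g` yields a
`ν`-normalized function. -/
def logPartition (ν : Measure X) (g : X × Y → ℝ) (y : Y) : ℝ :=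
  Real.log (∫ x, Real.exp (g (x, y)) ∂ν)

/-- The `ν`-normalization of `g`: `g` minus its log-partition function. -/
def logNormalize (ν : Measure X) (g : X × Y → ℝ) (p : X × Y) : ℝ :=
  g p - logPartition ν g p.2

lemma ae_ae_of_ae_prod_snd [MeasurableSpace Y] [SFinite ν] {π : Measure (X × Y)} [SFinite π]
    {P : X × Y → Prop} (hP : ∀ᵐ q ∂ν.prod π.snd, P q) : ∀ᵐ p ∂π, ∀ᵐ x ∂ν, P (x, p.2) := by
  rw [← Measure.prod_swap] at hP
  exact ae_of_ae_map measurable_snd.aemeasurable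
    (Measure.ae_ae_of_ae_prod (ae_of_ae_map measurable_swap.aemeasurable hP))

lemma isNormalized_logNormalize [NeZero ν] (hg : ∀ y, Integrable (fun x ↦ Real.exp (g (x, y))) ν) :
    IsNormalized ν (logNormalize ν g) := fun y ↦ by
  have hpos := integral_exp_pos (hg y)
  simp only [logNormalize, logPartition, Real.exp_sub, Real.exp_log hpos, integral_div]
  exact div_self hpos.ne'

lemma lipschitzWith_logPartition [NeZero ν] [PseudoMetricSpace Y]
    (hg : ∀ y, Integrable (fun x ↦ Real.exp (g (x, y))) ν) {K : NNReal}
    (hK : ∀ x, LipschitzWith K fun y ↦ g (x, y)) : LipschitzWith K (logPartition ν g) := by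
  refine LipschitzWith.of_le_add_mul _ fun y y' ↦ ?_
  have hexp (x : X) :
      Real.exp (g (x, y)) ≤ Real.exp (g (x, y')) * Real.exp (K * dist y y') := by
    rw [← Real.exp_add]
    exact Real.exp_le_exp.2 ((hK x).le_add_mul y y')
  calc logPartition ν g y
      ≤ Real.log (∫ x, Real.exp (g (x, y')) * Real.exp (K * dist y y') ∂ν) :=
        Real.log_le_log (integral_exp_pos (hg y))
          (integral_mono (hg y) ((hg y').mul_const _) hexp)
    _ = logPartition ν g y' + K * dist y y' := by
        rw [integral_mul_const, Real.log_mul (integral_exp_pos (hg y')).ne' (Real.exp_ne_zero _),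
          Real.log_exp, logPartition]

lemma logPartition_truncate_le [IsProbabilityMeasure ν] {c : X × Y → ℝ} {y : Y}
    (hc : ∫ x, Real.exp (c (x, y)) ∂ν = 1) (M : ℝ) :
    logPartition ν (fun p ↦ truncate M (c p)) y ≤ Real.exp (-M) := by
  have hint : Integrable (fun x ↦ Real.exp (c (x, y))) ν :=
    Integrable.of_integral_ne_zero (hc ▸ one_ne_zero)
  have hmeas : AEMeasurable (fun x ↦ Real.exp (truncate M (c (x, y)))) ν :=
    ((measurable_truncate M).comp_aemeasurable
      (Real.aemeasurable_of_aemeasurable_exp hint.aemeasurable)).exp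
  have hdom : Integrable (fun x ↦ Real.exp (c (x, y)) + Real.exp (-M)) ν :=
    hint.add (integrable_const _)
  have hint_truncate : Integrable (fun x ↦ Real.exp (truncate M (c (x, y)))) ν :=
    hdom.mono' hmeas.aestronglyMeasurable
      (Eventually.of_forall fun _ ↦ (Real.abs_exp _).trans_le exp_truncate_le)
  calc logPartition ν (fun p ↦ truncate M (c p)) y
      ≤ ∫ x, Real.exp (truncate M (c (x, y))) ∂ν - 1 :=
        Real.log_le_sub_one_of_pos (integral_exp_pos hint_truncate)
    _ ≤ ∫ x, (Real.exp (c (x, y)) + Real.exp (-M)) ∂ν - 1 :=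
        sub_le_sub_right (integral_mono hint_truncate hdom fun _ ↦ exp_truncate_le) 1
    _ = Real.exp (-M) := by
        rw [integral_add hint (integrable_const _), hc, integral_const, probReal_univ, one_smul,
          add_sub_cancel_left]

variable [MeasurableSpace Y] {M : ℝ}

lemma integrable_exp_section [IsFiniteMeasure ν] (hg : Measurable g) (hM : ∀ p, |g p| ≤ M) (y : Y) :
    Integrable (fun x ↦ Real.exp (g (x, y))) ν := by
  have hmeas : Measurable fun x ↦ Real.exp (g (x, y)) := by fun_prop
  refine integrable_of_abs_le (M := Real.exp M) hmeas.aestronglyMeasurable fun x ↦ ?_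
  rw [Real.abs_exp]
  exact Real.exp_le_exp.2 (abs_le.1 (hM _)).2

lemma measurable_logPartition [SFinite ν] (hg : Measurable g) : Measurable (logPartition ν g) :=
  Real.measurable_log.comp
    (Real.measurable_exp.comp hg).stronglyMeasurable.integral_prod_left'.measurable

lemma measurable_logNormalize [SFinite ν] (hg : Measurable g) : Measurable (logNormalize ν g) :=
  hg.sub ((measurable_logPartition hg).comp measurable_snd)

variable [IsProbabilityMeasure ν]

lemma abs_logPartition_le (hg : Measurable g) (hM : ∀ p, |g p| ≤ M) (y : Y) :
    |logPartition ν g y| ≤ M := by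
  have hint := integrable_exp_section (ν := ν) hg hM y
  have hlower : Real.exp (-M) ≤ ∫ x, Real.exp (g (x, y)) ∂ν := by
    simpa using integral_mono (integrable_const (μ := ν) (Real.exp (-M))) hint
      fun x ↦ Real.exp_le_exp.2 (abs_le.1 (hM (x, y))).1
  have hupper : ∫ x, Real.exp (g (x, y)) ∂ν ≤ Real.exp M := by
    simpa using integral_mono hint (integrable_const (μ := ν) (Real.exp M))
      fun x ↦ Real.exp_le_exp.2 (abs_le.1 (hM (x, y))).2
  have hpos := integral_exp_pos hint
  exact abs_le.2 ⟨(Real.le_log_iff_exp_le hpos).2 hlower, (Real.log_le_iff_le_exp hpos).2 hupper⟩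

lemma abs_logNormalize_le (hg : Measurable g) (hM : ∀ p, |g p| ≤ M) (p : X × Y) :
    |logNormalize ν g p| ≤ M + M :=
  (abs_sub _ _).trans (add_le_add (hM p) (abs_logPartition_le hg hM p.2))

lemma integrable_logNormalize {π : Measure (X × Y)} [IsFiniteMeasure π] (hg : Measurable g)
    (hM : ∀ p, |g p| ≤ M) : Integrable (logNormalize ν g) π :=
  integrable_of_abs_le (measurable_logNormalize hg).aestronglyMeasurable (abs_logNormalize_le hg hM)

lemma tendsto_logPartition {G : ℕ → X × Y → ℝ} (hG : ∀ n, Measurable (G n)) (hg : Measurable g)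
    (hGM : ∀ n p, |G n p| ≤ M) (hgM : ∀ p, |g p| ≤ M) {y : Y}
    (hlim : ∀ᵐ x ∂ν, Tendsto (fun n ↦ G n (x, y)) atTop (𝓝 (g (x, y)))) :
    Tendsto (fun n ↦ logPartition ν (G n) y) atTop (𝓝 (logPartition ν g y)) := by
  refine Tendsto.log ?_ (integral_exp_pos (integrable_exp_section hg hgM y)).ne'
  refine tendsto_integral_of_dominated_convergence (fun _ ↦ Real.exp M)
    (fun n ↦ (integrable_exp_section (hG n) (hGM n) y).aestronglyMeasurable) (integrable_const _)
    (fun n ↦ Eventually.of_forall fun x ↦ ?_) ?_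
  · rw [Real.norm_eq_abs, Real.abs_exp]
    exact Real.exp_le_exp.2 (abs_le.1 (hGM n _)).2
  · filter_upwards [hlim] with x hx
    exact (Real.continuous_exp.tendsto _).comp hx

lemma tendsto_integral_logNormalize {π : Measure (X × Y)} [IsFiniteMeasure π]
    {G : ℕ → X × Y → ℝ} (hG : ∀ n, Measurable (G n)) (hg : Measurable g)
    (hGM : ∀ n p, |G n p| ≤ M) (hgM : ∀ p, |g p| ≤ M)
    (hlim : ∀ᵐ p ∂(π + ν.prod π.snd), Tendsto (fun n ↦ G n p) atTop (𝓝 (g p))) :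
    Tendsto (fun n ↦ ∫ p, logNormalize ν (G n) p ∂π) atTop (𝓝 (∫ p, logNormalize ν g p ∂π)) := by
  obtain ⟨hπ, hprod⟩ := ae_add_measure_iff.1 hlim
  refine tendsto_integral_of_dominated_convergence (fun _ ↦ M + M)
    (fun n ↦ (measurable_logNormalize (hG n)).aestronglyMeasurable) (integrable_const _)
    (fun n ↦ Eventually.of_forall (abs_logNormalize_le (hG n) (hGM n))) ?_
  filter_upwards [hπ, ae_ae_of_ae_prod_snd hprod] with p hp hp_section
  exact hp.sub (tendsto_logPartition hG hg hGM hgM hp_section)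

end Normalization

section Entropy

variable {X Y : Type*}
  [PseudoMetricSpace X] [MeasurableSpace X] [BorelSpace X]
  [PseudoMetricSpace Y] [MeasurableSpace Y] [BorelSpace Y] [SecondCountableTopologyEither X Y]
  {ν : Measure X} [IsProbabilityMeasure ν] {π : Measure (X × Y)} {M : ℝ}

/-- The values `∫ f dπ` at the bounded Lipschitz `ν`-normalized functions `f`, whose supremum is to
be compared with `-H^ν(π)`. On noncompact spaces boundedness ensures that the integrals are not
junk values. -/
def lipschitzIntegrals (ν : Measure X) (π : Measure (X × Y)) : Set EReal :=
  {r | ∃ f : X × Y → ℝ, (∃ K, LipschitzWith K f) ∧ (∃ M, ∀ p, |f p| ≤ M) ∧ IsNormalized ν f ∧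
    r = ((∫ p, f p ∂π : ℝ) : EReal)}

lemma integral_logNormalize_mem_lipschitzIntegrals {g : X × Y → ℝ} {K : NNReal}
    (hK : LipschitzWith K g) (hM : ∀ p, |g p| ≤ M) :
    ((∫ p, logNormalize ν g p ∂π : ℝ) : EReal) ∈ lipschitzIntegrals ν π := by
  have hg : Measurable g := hK.continuous.measurable
  have hint := integrable_exp_section (ν := ν) hg hM
  have hsection (x : X) : LipschitzWith K fun y ↦ g (x, y) := by
    simpa only [mul_one, Function.comp_def] using hK.comp (LipschitzWith.prodMk_left x)
  have hL : LipschitzWith K (logPartition ν g) := lipschitzWith_logPartition hint hsection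
  exact ⟨logNormalize ν g, ⟨_, hK.sub (hL.comp LipschitzWith.prod_snd)⟩,
    ⟨_, abs_logNormalize_le hg hM⟩, isNormalized_logNormalize hint, rfl⟩

variable [IsFiniteMeasure π]

lemma integral_logNormalize_le_sSup_lipschitzIntegrals {g : X × Y → ℝ} (hg : Measurable g)
    (hM : ∀ p, |g p| ≤ M) :
    ((∫ p, logNormalize ν g p ∂π : ℝ) : EReal) ≤ sSup (lipschitzIntegrals ν π) := by
  obtain ⟨G, hGL, hGM, hlim⟩ :=
    exists_lipschitzWith_tendsto_ae (μ := π + ν.prod π.snd) hg.aestronglyMeasurable hM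
  choose K hK using hGL
  refine le_of_tendsto' ((continuous_coe_real_ereal.tendsto _).comp
    (tendsto_integral_logNormalize (fun n ↦ (hK n).continuous.measurable) hg hGM hM hlim))
    fun n ↦ ?_
  exact le_sSup (integral_logNormalize_mem_lipschitzIntegrals (hK n) (hGM n))

lemma integral_truncate_sub_le_sSup_lipschitzIntegrals {c : X × Y → ℝ} (hc : Measurable c)
    (hnorm : IsNormalized ν c) (hM : 0 ≤ M) :
    ((∫ p, truncate M (c p) ∂π - Real.exp (-M) * π.real Set.univ : ℝ) : EReal)
      ≤ sSup (lipschitzIntegrals ν π) := by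
  have hmeas : Measurable fun p ↦ truncate M (c p) := (measurable_truncate M).comp hc
  have hbound (p : X × Y) : |truncate M (c p)| ≤ M := abs_truncate_le hM
  have hint : Integrable (fun p ↦ truncate M (c p)) π :=
    integrable_of_abs_le hmeas.aestronglyMeasurable hbound
  refine le_trans ?_ (integral_logNormalize_le_sSup_lipschitzIntegrals hmeas hbound)
  rw [EReal.coe_le_coe_iff]
  calc ∫ p, truncate M (c p) ∂π - Real.exp (-M) * π.real Set.univ
      = ∫ p, (truncate M (c p) - Real.exp (-M)) ∂π := by
        rw [integral_sub hint (integrable_const _), integral_const, smul_eq_mul, mul_comm]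
    _ ≤ ∫ p, logNormalize ν (fun p ↦ truncate M (c p)) p ∂π :=
        integral_mono (hint.sub (integrable_const _)) (integrable_logNormalize hmeas hbound)
          fun p ↦ sub_le_sub_left (logPartition_truncate_le (hnorm p.2) M) _

lemma eInt_le_sSup_lipschitzIntegrals {c : X × Y → ℝ} (hc : Measurable c)
    (hnorm : IsNormalized ν c) (hwd : IntWellDef π c) :
    eInt π c ≤ sSup (lipschitzIntegrals ν π) := by
  have herror : Tendsto (fun n : ℕ ↦ Real.exp (-n) * π.real Set.univ) atTop (𝓝 0) := by
    simpa using (Real.tendsto_exp_neg_atTop_nhds_zero.comp tendsto_natCast_atTop_atTop).mul_const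
      (π.real Set.univ)
  have hlim : Tendsto (fun n : ℕ ↦ eInt π (fun p ↦ truncate n (c p)) +
      ((-(Real.exp (-n) * π.real Set.univ) : ℝ) : EReal)) atTop (𝓝 (eInt π c)) := by
    simpa using! (EReal.continuousAt_add (p := (eInt π c, ((0 : ℝ) : EReal)))
      (by simp) (by simp)).tendsto.comp ((tendsto_eInt_truncate hc.aemeasurable hwd).prodMk_nhds
        ((continuous_coe_real_ereal.tendsto _).comp (by simpa using herror.neg)))
  refine le_of_tendsto' hlim fun n ↦ ?_
  have hint : Integrable (fun p ↦ truncate n (c p)) π :=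
    integrable_of_abs_le ((measurable_truncate n).comp hc).aestronglyMeasurable
      fun _ ↦ abs_truncate_le n.cast_nonneg
  rw [eInt_eq_integral hint, ← EReal.coe_add, ← sub_eq_add_neg]
  exact integral_truncate_sub_le_sSup_lipschitzIntegrals hc hnorm n.cast_nonneg

theorem statement11_general (ν : Measure X) [IsProbabilityMeasure ν] (π : Measure (X × Y))
    [IsFiniteMeasure π] :
    Hnu ν π = - sSup { r : EReal | ∃ f : X × Y → ℝ, (∃ K, LipschitzWith K f) ∧
      (∃ M, ∀ p, |f p| ≤ M) ∧ (∀ y, (∫ x, Real.exp (f (x, y)) ∂ν) = 1) ∧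
      r = ((∫ p, f p ∂π : ℝ) : EReal) } := by
  refine congrArg Neg.neg (le_antisymm (sSup_le ?_) (sSup_le ?_))
  · rintro _ ⟨c, hc, hnorm, hwd, rfl⟩
    exact eInt_le_sSup_lipschitzIntegrals hc hnorm hwd
  · rintro _ ⟨f, ⟨K, hK⟩, ⟨M, hM⟩, hnorm, rfl⟩
    have hint : Integrable f π := integrable_of_abs_le hK.continuous.aestronglyMeasurable hM
    exact le_sSup ⟨f, hK.continuous.measurable, hnorm, .inl hint.lintegral_lt_top.ne,
      (eInt_eq_integral hint).symm⟩

end Entropy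

lemma exists_abs_le_of_lipschitzWith {Z : Type*} [PseudoMetricSpace Z] [CompactSpace Z] {f : Z → ℝ}
    (hf : ∃ K, LipschitzWith K f) : ∃ M, ∀ z, |f z| ≤ M := by
  obtain ⟨K, hK⟩ := hf
  simpa using isCompact_univ.exists_bound_of_continuousOn hK.continuous.continuousOn

/-- for compact metric spaces `X`, `Y`, an a priori probability `ν` with full
support, and a Borel probability `π` on `X × Y`, the entropy `H^ν(π)` can be computed taking
the supremum over Lipschitz `ν`-normalized functions only. -/
theorem statement11 {X Y : Type*}
    [MetricSpace X] [CompactSpace X] [MeasurableSpace X] [BorelSpace X]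
    [MetricSpace Y] [CompactSpace Y] [MeasurableSpace Y] [BorelSpace Y]
    (ν : Measure X) [IsProbabilityMeasure ν] [ν.IsOpenPosMeasure]
    (pi : Measure (X × Y)) [IsProbabilityMeasure pi] :
    Hnu ν pi
      = - sSup { r : EReal | ∃ f : X × Y → ℝ, (∃ K, LipschitzWith K f) ∧
          (∀ y, (∫ x, Real.exp (f (x, y)) ∂ν) = 1) ∧
          r = ((∫ p, f p ∂pi : ℝ) : EReal) } := by
  simp only [statement11_general, ← and_assoc, and_iff_left_of_imp exists_abs_le_of_lipschitzWith]

end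
end

section
/- Let X and Y be compact metric spaces, ν a Borel probability measure on X, and π a Borel probability measure on X × Y with marginals P on X and Q on Y. Suppose there is a continuous (respectively Lipschitz) function φ : X × Y → ℝ such that e^φ is a ν-Jacobian of π. Then: (1) P and ν are equivalent (each absolutely continuous with respect to the other); (2) dP/dν(x) = ∫ e^{φ(x,y)} dQ(y), which is continuous (respectively Lipschitz); (3) there exist constants 0 < c₁ < c₂ with c₁ < dP/dν(x) < c₂ for all x ∈ X; and (4) setting ψ = φ − log(dP/dν), the function e^ψ is a P-Jacobian of π. -/
/-!
A `ν`-Jacobian `J` of `π` is a density of `π` with respect to `ν ⊗ Q`, normalised in the first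
variable: test the Jacobian identity against indicators and use Tonelli. Integrating out `y` shows
that `P` has density `g x = ∫ J (x, y) dQ(y)` with respect to `ν`. For `J = e^φ` with `φ` bounded,
`g` lies between two positive constants and inherits the regularity of `φ` in `x`, and dividing
`J` by `g` turns a `ν`-Jacobian into a `g ν`-Jacobian.
-/

open MeasureTheory ENNReal

noncomputable section

/-- `J` is a `ν`-Jacobian of `pi`: it is measurable, nonnegative, satisfies
`∫ J(x,y) dν(x) = 1` for all `y`, and `∬ f(x,y) J(x,y) dν(x) dπ(x,y) = ∫ f dπ` for every
bounded measurable `f`. -/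
def IsNuJacobianOf {X Y : Type*} [MeasurableSpace X] [MeasurableSpace Y]
    (ν : Measure X) (pi : Measure (X × Y)) (J : X × Y → ℝ) : Prop :=
  Measurable J ∧ (∀ p, 0 ≤ J p) ∧ (∀ y, (∫ x, J (x, y) ∂ν) = 1) ∧
    ∀ f : X × Y → ℝ, Measurable f → (∃ C, ∀ p, |f p| ≤ C) →
      (∫ p, (∫ x, f (x, p.2) * J (x, p.2) ∂ν) ∂pi) = ∫ p, f p ∂pi

theorem lipschitzOnWith_exp_Iic (M : ℝ) :
    LipschitzOnWith (Real.exp M).toNNReal Real.exp (Set.Iic M) :=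
  (convex_Iic M).lipschitzOnWith_of_nnnorm_deriv_le
    (fun _ _ => Real.differentiableAt_exp) fun t ht => by
      rw [← NNReal.coe_le_coe, Real.deriv_exp, coe_nnnorm, Real.norm_of_nonneg (Real.exp_pos t).le,
        Real.coe_toNNReal _ (Real.exp_pos M).le]
      exact Real.exp_le_exp.2 ht

theorem lipschitzWith_exp_comp {X : Type*} [PseudoEMetricSpace X] {f : X → ℝ} {K : NNReal} {M : ℝ}
    (hf : LipschitzWith K f) (hM : ∀ x, f x ≤ M) :
    LipschitzWith ((Real.exp M).toNNReal * K) fun x => Real.exp (f x) :=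
  lipschitzOnWith_univ.1
    ((lipschitzOnWith_exp_Iic M).comp hf.lipschitzOnWith fun x _ => hM x)

theorem lipschitzWith_integral {X Y E : Type*} [PseudoMetricSpace X] [MeasurableSpace Y]
    [NormedAddCommGroup E] [NormedSpace ℝ E] {μ : Measure Y} [IsFiniteMeasure μ]
    {f : X → Y → E} {K : NNReal} (hf : ∀ x, Integrable (f x) μ)
    (hK : ∀ y, LipschitzWith K fun x => f x y) :
    LipschitzWith (K * (μ Set.univ).toNNReal) fun x => ∫ y, f x y ∂μ :=
  LipschitzWith.of_dist_le_mul fun a b => by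
    have hbound : ∀ y, ‖f a y - f b y‖ ≤ K * dist a b := fun y => by
      simpa only [dist_eq_norm] using (hK y).dist_le_mul a b
    calc dist (∫ y, f a y ∂μ) (∫ y, f b y ∂μ)
      _ = ‖∫ y, (f a y - f b y) ∂μ‖ := by rw [dist_eq_norm, integral_sub (hf a) (hf b)]
      _ ≤ K * dist a b * μ.real Set.univ :=
          norm_integral_le_of_norm_le_const (.of_forall hbound)
      _ = ↑(K * (μ Set.univ).toNNReal) * dist a b := mul_right_comm _ _ _

theorem integrable_exp_of_le {Y : Type*} [MeasurableSpace Y] {μ : Measure Y} [IsFiniteMeasure μ]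
    {f : Y → ℝ} {M : ℝ} (hf : AEMeasurable f μ) (hM : ∀ y, f y ≤ M) :
    Integrable (fun y => Real.exp (f y)) μ :=
  .of_mem_Icc 0 (Real.exp M) (Real.measurable_exp.comp_aemeasurable hf)
    (.of_forall fun y => ⟨(Real.exp_pos _).le, Real.exp_le_exp.2 (hM y)⟩)

theorem integral_exp_mem_Icc {Y : Type*} [MeasurableSpace Y] {μ : Measure Y}
    [IsProbabilityMeasure μ] {f : Y → ℝ} {m M : ℝ} (hf : AEMeasurable f μ)
    (hfmM : ∀ y, f y ∈ Set.Icc m M) :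
    ∫ y, Real.exp (f y) ∂μ ∈ Set.Icc (Real.exp m) (Real.exp M) :=
  (convex_Icc _ _).integral_mem isClosed_Icc
    (.of_forall fun y => ⟨Real.exp_le_exp.2 (hfmM y).1, Real.exp_le_exp.2 (hfmM y).2⟩)
    (integrable_exp_of_le hf fun y => (hfmM y).2)

theorem continuous_integral_exp {X Y : Type*} [TopologicalSpace X] [FirstCountableTopology X]
    [MeasurableSpace Y] {μ : Measure Y} [IsFiniteMeasure μ] {f : X → Y → ℝ} {M : ℝ}
    (hf : ∀ x, AEMeasurable (f x) μ) (hcont : ∀ y, Continuous fun x => f x y)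
    (hM : ∀ x y, f x y ≤ M) :
    Continuous fun x => ∫ y, Real.exp (f x y) ∂μ := by
  have hbound : ∀ x y, ‖Real.exp (f x y)‖ ≤ Real.exp M := fun x y => by
    simpa only [Real.norm_eq_abs, Real.abs_exp] using Real.exp_le_exp.2 (hM x y)
  exact continuous_of_dominated
    (fun x => (integrable_exp_of_le (hf x) (hM x)).aestronglyMeasurable)
    (fun x => .of_forall (hbound x)) (integrable_const _)
    (.of_forall fun y => Real.continuous_exp.comp (hcont y))

theorem lipschitzWith_integral_exp {X Y : Type*} [PseudoMetricSpace X] [MeasurableSpace Y]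
    {μ : Measure Y} [IsFiniteMeasure μ] {f : X → Y → ℝ} {K : NNReal} {M : ℝ}
    (hf : ∀ x, AEMeasurable (f x) μ) (hK : ∀ y, LipschitzWith K fun x => f x y)
    (hM : ∀ x y, f x y ≤ M) :
    LipschitzWith ((Real.exp M).toNNReal * K * (μ Set.univ).toNNReal)
      fun x => ∫ y, Real.exp (f x y) ∂μ :=
  lipschitzWith_integral (fun x => integrable_exp_of_le (hf x) (hM x))
    fun y => lipschitzWith_exp_comp (hK y) fun x => hM x y

theorem map_fst_withDensity_prod {X Y : Type*} [MeasurableSpace X] [MeasurableSpace Y]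
    {μ : Measure X} [SFinite μ] {ν : Measure Y} [SFinite ν] {f : X × Y → ℝ≥0∞}
    (hf : Measurable f) :
    ((μ.prod ν).withDensity f).map Prod.fst = μ.withDensity fun x => ∫⁻ y, f (x, y) ∂ν := by
  ext A hA
  rw [Measure.map_apply measurable_fst hA, withDensity_apply _ (measurable_fst hA),
    withDensity_apply _ hA, ← Set.prod_univ, setLIntegral_prod _ hf.aemeasurable]
  simp only [Measure.restrict_univ]

namespace IsNuJacobianOf

variable {X Y : Type*} [MeasurableSpace X] [MeasurableSpace Y]
  {ν : Measure X} {pi : Measure (X × Y)} {J : X × Y → ℝ}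

protected theorem measurable (hJ : IsNuJacobianOf ν pi J) : Measurable J := hJ.1

theorem nonneg (hJ : IsNuJacobianOf ν pi J) (p : X × Y) : 0 ≤ J p := hJ.2.1 p

theorem integral_eq_one (hJ : IsNuJacobianOf ν pi J) (y : Y) : ∫ x, J (x, y) ∂ν = 1 :=
  hJ.2.2.1 y

theorem integral_integral_mul (hJ : IsNuJacobianOf ν pi J) {f : X × Y → ℝ} (hf : Measurable f)
    (hbdd : ∃ C, ∀ p, |f p| ≤ C) :
    ∫ p, (∫ x, f (x, p.2) * J (x, p.2) ∂ν) ∂pi = ∫ p, f p ∂pi :=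
  hJ.2.2.2 f hf hbdd

theorem integrable_left (hJ : IsNuJacobianOf ν pi J) (y : Y) :
    Integrable (fun x => J (x, y)) ν :=
  .of_integral_ne_zero (by rw [hJ.integral_eq_one y]; exact one_ne_zero)

theorem integral_integral_indicator (hJ : IsNuJacobianOf ν pi J) {S : Set (X × Y)}
    (hS : MeasurableSet S) :
    ∫ p, (∫ x, S.indicator J (x, p.2) ∂ν) ∂pi = pi.real S := by
  have hbdd : ∃ C, ∀ p, |S.indicator (1 : X × Y → ℝ) p| ≤ C :=
    ⟨1, fun p => by by_cases hp : p ∈ S <;> simp [hp]⟩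
  have hmul : ∀ p, S.indicator 1 p * J p = S.indicator J p := fun p => by
    by_cases hp : p ∈ S <;> simp [hp]
  simpa only [hmul, integral_indicator_one hS] using
    hJ.integral_integral_mul (measurable_one.indicator hS) hbdd

theorem integrable_integral_indicator [SFinite ν] [IsFiniteMeasure pi]
    (hJ : IsNuJacobianOf ν pi J) {S : Set (X × Y)} (hS : MeasurableSet S) :
    Integrable (fun p : X × Y => ∫ x, S.indicator J (x, p.2) ∂ν) pi := by
  have hmeas : StronglyMeasurable fun y => ∫ x, S.indicator J (x, y) ∂ν :=
    (hJ.measurable.indicator hS).stronglyMeasurable.integral_prod_left'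
  refine .of_mem_Icc 0 1 (hmeas.measurable.comp measurable_snd).aemeasurable
    (.of_forall fun p => ⟨integral_nonneg fun x => Set.indicator_nonneg (fun q _ => hJ.nonneg q) _,
      ?_⟩)
  calc ∫ x, S.indicator J (x, p.2) ∂ν
    _ ≤ ∫ x, J (x, p.2) ∂ν :=
        integral_mono_of_nonneg
          (.of_forall fun x => Set.indicator_nonneg (fun q _ => hJ.nonneg q) _)
          (hJ.integrable_left p.2)
          (.of_forall fun x => Set.indicator_le_self' (fun q _ => hJ.nonneg q) _)
    _ = 1 := hJ.integral_eq_one p.2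

theorem eq_withDensity_prod [SFinite ν] [IsFiniteMeasure pi] (hJ : IsNuJacobianOf ν pi J) :
    pi = (ν.prod (pi.map Prod.snd)).withDensity fun p => ENNReal.ofReal (J p) := by
  ext S hS
  have hnonneg : ∀ p, 0 ≤ S.indicator J p := Set.indicator_nonneg fun p _ => hJ.nonneg p
  have hmeas : Measurable fun p => ENNReal.ofReal (S.indicator J p) :=
    (hJ.measurable.indicator hS).ennreal_ofReal
  have hint : ∀ y, Integrable (fun x => S.indicator J (x, y)) ν := fun y =>
    (hJ.integrable_left y).indicator (measurable_prodMk_right hS)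
  calc pi S
    _ = ENNReal.ofReal (∫ p, (∫ x, S.indicator J (x, p.2) ∂ν) ∂pi) := by
        rw [hJ.integral_integral_indicator hS, ofReal_measureReal]
    _ = ∫⁻ p, ENNReal.ofReal (∫ x, S.indicator J (x, p.2) ∂ν) ∂pi :=
        ofReal_integral_eq_lintegral_ofReal (hJ.integrable_integral_indicator hS)
          (.of_forall fun p => integral_nonneg fun x => hnonneg _)
    _ = ∫⁻ p, (∫⁻ x, ENNReal.ofReal (S.indicator J (x, p.2)) ∂ν) ∂pi :=
        lintegral_congr fun p =>
          ofReal_integral_eq_lintegral_ofReal (hint p.2) (.of_forall fun x => hnonneg _)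
    _ = ∫⁻ y, (∫⁻ x, ENNReal.ofReal (S.indicator J (x, y)) ∂ν) ∂pi.map Prod.snd :=
        (lintegral_map hmeas.lintegral_prod_left' measurable_snd).symm
    _ = ∫⁻ p, ENNReal.ofReal (S.indicator J p) ∂ν.prod (pi.map Prod.snd) :=
        (lintegral_prod_symm' _ hmeas).symm
    _ = (ν.prod (pi.map Prod.snd)).withDensity (fun p => ENNReal.ofReal (J p)) S := by
        rw [withDensity_apply _ hS, ← lintegral_indicator hS]
        exact lintegral_congr fun p => by by_cases hp : p ∈ S <;> simp [hp]

theorem integrable_prod [SFinite ν] [IsFiniteMeasure pi] (hJ : IsNuJacobianOf ν pi J) :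
    Integrable J (ν.prod (pi.map Prod.snd)) := by
  rw [← lintegral_ofReal_ne_top_iff_integrable hJ.measurable.aestronglyMeasurable
    (.of_forall hJ.nonneg), ← setLIntegral_univ, ← withDensity_apply _ .univ,
    ← hJ.eq_withDensity_prod]
  exact measure_ne_top pi Set.univ

theorem map_fst_eq_withDensity [SFinite ν] [IsFiniteMeasure pi] (hJ : IsNuJacobianOf ν pi J) :
    pi.map Prod.fst =
      ν.withDensity fun x => ENNReal.ofReal (∫ y, J (x, y) ∂pi.map Prod.snd) := by
  conv_lhs => rw [hJ.eq_withDensity_prod, map_fst_withDensity_prod hJ.measurable.ennreal_ofReal]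
  refine withDensity_congr_ae ?_
  filter_upwards [hJ.integrable_prod.prod_right_ae] with x hx
  exact (ofReal_integral_eq_lintegral_ofReal hx (.of_forall fun y => hJ.nonneg _)).symm

theorem withDensity_div (hJ : IsNuJacobianOf ν pi J) {g : X → ℝ} (hg : Measurable g)
    (hg_pos : ∀ x, 0 < g x) :
    IsNuJacobianOf (ν.withDensity fun x => ENNReal.ofReal (g x)) pi fun p => J p / g p.1 := by
  have hcancel : ∀ (F : X → ℝ) (y : Y),
      ∫ x, F x * (J (x, y) / g x) ∂ν.withDensity (fun x => ENNReal.ofReal (g x)) =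
        ∫ x, F x * J (x, y) ∂ν := fun F y => by
    rw [integral_withDensity_eq_integral_toReal_smul hg.ennreal_ofReal
      (.of_forall fun x => ENNReal.ofReal_lt_top)]
    refine integral_congr_ae (.of_forall fun x => ?_)
    have hgx : g x ≠ 0 := (hg_pos x).ne'
    simp only [ENNReal.toReal_ofReal (hg_pos x).le, smul_eq_mul]
    field_simp
  refine ⟨hJ.measurable.div (hg.comp measurable_fst),
    fun p => div_nonneg (hJ.nonneg p) (hg_pos p.1).le, fun y => ?_, fun f hf hbdd => ?_⟩
  · simpa only [one_mul, hJ.integral_eq_one y] using hcancel (fun _ => 1) y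
  · simpa only [hcancel fun x => f (x, _)] using hJ.integral_integral_mul hf hbdd

end IsNuJacobianOf

theorem statement12_general {X Y : Type*} [PseudoMetricSpace X] [MeasurableSpace X]
    [MeasurableSpace Y] (ν : Measure X) [SFinite ν] (pi : Measure (X × Y))
    [IsProbabilityMeasure pi] (P : Measure X) (Q : Measure Y)
    (hP : pi.map Prod.fst = P) (hQ : pi.map Prod.snd = Q)
    (φ : X × Y → ℝ) (hφ : ∀ y, Continuous fun x => φ (x, y)) (hbdd : ∃ M, ∀ p, |φ p| ≤ M)
    (hjac : IsNuJacobianOf ν pi (fun p => Real.exp (φ p))) :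
    (P ≪ ν ∧ ν ≪ P)
    ∧ P = ν.withDensity (fun x => ENNReal.ofReal (∫ y, Real.exp (φ (x, y)) ∂Q))
    ∧ Continuous (fun x => ∫ y, Real.exp (φ (x, y)) ∂Q)
    ∧ ((∃ K, ∀ y, LipschitzWith K fun x => φ (x, y)) →
        ∃ K, LipschitzWith K (fun x => ∫ y, Real.exp (φ (x, y)) ∂Q))
    ∧ (∃ c₁ c₂ : ℝ, 0 < c₁ ∧ c₁ < c₂ ∧
        ∀ x, c₁ < (∫ y, Real.exp (φ (x, y)) ∂Q) ∧ (∫ y, Real.exp (φ (x, y)) ∂Q) < c₂)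
    ∧ IsNuJacobianOf P pi
        (fun p => Real.exp (φ p - Real.log (∫ y, Real.exp (φ (p.1, y)) ∂Q))) := by
  subst hP hQ
  obtain ⟨M, hM⟩ := hbdd
  set Q := pi.map Prod.snd
  set g : X → ℝ := fun x => ∫ y, Real.exp (φ (x, y)) ∂Q
  have : IsProbabilityMeasure Q := Measure.isProbabilityMeasure_map measurable_snd.aemeasurable
  have hφ_mem : ∀ p, φ p ∈ Set.Icc (-M) M := fun p => abs_le.1 (hM p)
  have hφ_meas : ∀ x, AEMeasurable (fun y => φ (x, y)) Q := fun x => by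
    simpa only [Function.comp_def, Real.log_exp] using
      (hjac.measurable.log.comp (measurable_prodMk_left (x := x))).aemeasurable
  have hg_mem : ∀ x, g x ∈ Set.Icc (Real.exp (-M)) (Real.exp M) := fun x =>
    integral_exp_mem_Icc (hφ_meas x) fun y => hφ_mem (x, y)
  have hg_pos : ∀ x, 0 < g x := fun x => (Real.exp_pos (-M)).trans_le (hg_mem x).1
  have hg_meas : Measurable g :=
    hjac.measurable.stronglyMeasurable.integral_prod_right'.measurable
  have hdens : pi.map Prod.fst = ν.withDensity fun x => ENNReal.ofReal (g x) :=
    hjac.map_fst_eq_withDensity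
  refine ⟨⟨?_, ?_⟩, hdens, ?_, ?_, ?_, ?_⟩
  · exact hdens ▸ withDensity_absolutelyContinuous _ _
  · exact hdens ▸ withDensity_absolutelyContinuous' hg_meas.ennreal_ofReal.aemeasurable
      (.of_forall fun x => (ENNReal.ofReal_pos.2 (hg_pos x)).ne')
  · exact continuous_integral_exp hφ_meas hφ fun x y => (hφ_mem (x, y)).2
  · exact fun ⟨K, hK⟩ => ⟨_, lipschitzWith_integral_exp hφ_meas hK fun x y => (hφ_mem (x, y)).2⟩
  · have hhalf : Real.exp (-M) / 2 < Real.exp (-M) := half_lt_self (Real.exp_pos _)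
    exact ⟨Real.exp (-M) / 2, Real.exp M + Real.exp (-M), half_pos (Real.exp_pos _),
      hhalf.trans (lt_add_of_pos_left _ (Real.exp_pos _)), fun x =>
      ⟨hhalf.trans_le (hg_mem x).1, (hg_mem x).2.trans_lt (lt_add_of_pos_right _ (Real.exp_pos _))⟩⟩
  · have hexp_sub : ∀ p, Real.exp (φ p - Real.log (g p.1)) = Real.exp (φ p) / g p.1 := fun p => by
      rw [Real.exp_sub, Real.exp_log (hg_pos p.1)]
    rw [hdens, funext hexp_sub]
    exact hjac.withDensity_div hg_meas hg_pos

/-- if `e^φ` is a `ν`-Jacobian of `π` for a continuous `φ`, then the `x`-marginal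
`P` of `π` is equivalent to `ν` with density `dP/dν(x) = ∫ e^{φ(x,y)} dQ(y)` (continuous, and
Lipschitz if `φ` is), bounded between two positive constants, and `e^ψ` with
`ψ = φ − log(dP/dν)` is a `P`-Jacobian of `π`. -/
theorem statement12 {X Y : Type*}
    [MetricSpace X] [CompactSpace X] [MeasurableSpace X] [BorelSpace X]
    [MetricSpace Y] [CompactSpace Y] [MeasurableSpace Y] [BorelSpace Y]
    (ν : Measure X) [IsProbabilityMeasure ν]
    (pi : Measure (X × Y)) [IsProbabilityMeasure pi]
    (P : Measure X) (Q : Measure Y)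
    (hP : pi.map Prod.fst = P) (hQ : pi.map Prod.snd = Q)
    (φ : X × Y → ℝ) (hφ : Continuous φ)
    (hjac : IsNuJacobianOf ν pi (fun p => Real.exp (φ p))) :
    (P ≪ ν ∧ ν ≪ P)
    ∧ P = ν.withDensity (fun x => ENNReal.ofReal (∫ y, Real.exp (φ (x, y)) ∂Q))
    ∧ Continuous (fun x => ∫ y, Real.exp (φ (x, y)) ∂Q)
    ∧ ((∃ K, LipschitzWith K φ) →
        ∃ K, LipschitzWith K (fun x => ∫ y, Real.exp (φ (x, y)) ∂Q))
    ∧ (∃ c₁ c₂ : ℝ, 0 < c₁ ∧ c₁ < c₂ ∧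
        ∀ x, c₁ < (∫ y, Real.exp (φ (x, y)) ∂Q) ∧ (∫ y, Real.exp (φ (x, y)) ∂Q) < c₂)
    ∧ IsNuJacobianOf P pi
        (fun p => Real.exp (φ p - Real.log (∫ y, Real.exp (φ (p.1, y)) ∂Q))) := by
  have hbdd : ∃ M, ∀ p, |φ p| ≤ M :=
    let ⟨M, hM⟩ := isCompact_univ.exists_bound_of_continuousOn hφ.continuousOn
    ⟨M, fun p => hM p (Set.mem_univ p)⟩
  obtain ⟨hequiv, hdens, hcont, hlip, hbounds, hjacP⟩ :=
    statement12_general ν pi P Q hP hQ φ (fun y => by fun_prop) hbdd hjac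
  refine ⟨hequiv, hdens, hcont, fun ⟨K, hK⟩ => hlip ⟨K, fun y => ?_⟩, hbounds, hjacP⟩
  simpa only [mul_one, Function.comp_def] using hK.comp (LipschitzWith.prodMk_right y)

end
end

section
/- Let M be a compact metric space, Ω̂ = Ω⁻ × Ω⁺ with Ω⁻ = Ω⁺ = M^ℕ, σ̂ the two-sided shift on Ω̂, and let μ̂ be a σ̂-invariant Borel probability on Ω̂, with μ its projection to Ω⁺ and μ⁻ its projection to Ω⁻. Let A : Ω⁺ → ℝ be Lipschitz (viewed as a function on Ω̂ depending only on the x-coordinates), W : Ω̂ → ℝ be Lipschitz, and suppose that A⁻ := A∘σ̂^{-1} + W∘σ̂^{-1} − W depends only on the y-coordinates (so A⁻ is a function on Ω⁻). Then: (1) ∫ A dμ = ∫ A⁻ dμ⁻; and (2) ∫ A⁻∘θ^{-1} dμ = ∫ A∘θ dμ⁻, where θ : Ω⁻ → Ω⁺ is the conjugation θ(…, y₃, y₂, y₁|) = |y₁, y₂, y₃, …). -/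
open MeasureTheory

noncomputable section

/-- The shift map `σ` on `M^ℕ`. -/
def shift {M : Type*} (x : ℕ → M) : ℕ → M := fun n => x (n + 1)

/-- Prepending a symbol `a ∈ M` to a sequence `x ∈ M^ℕ`. -/
def cons {M : Type*} (a : M) (x : ℕ → M) : ℕ → M := fun n => Nat.casesOn n a x

/-- The metric `d(x, y) = Σ_{i ≥ 1} 2^{-i} d(x_i, y_i)` on `M^ℕ`. -/
def dOmega {M : Type*} [MetricSpace M] (x y : ℕ → M) : ℝ :=
  ∑' i : ℕ, (1 / 2 : ℝ) ^ (i + 1) * dist (x i) (y i)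

/-- `B` is Lipschitz on `M^ℕ` for the metric `dOmega`. -/
def LipOmega {M : Type*} [MetricSpace M] (B : (ℕ → M) → ℝ) : Prop :=
  ∃ K : ℝ, ∀ x y : ℕ → M, |B x - B y| ≤ K * dOmega x y

/-- `W` is Lipschitz on `Ω̂ = Ω⁻ × Ω⁺`. -/
def LipOmegaHat {M : Type*} [MetricSpace M] (W : (ℕ → M) × (ℕ → M) → ℝ) : Prop :=
  ∃ K : ℝ, ∀ p q : (ℕ → M) × (ℕ → M),
    |W p - W q| ≤ K * (dOmega p.1 q.1 + dOmega p.2 q.2)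

/-- The two-sided shift `σ̂` on `Ω̂ = Ω⁻ × Ω⁺`,
`σ̂(…,y₂,y₁ | x₁,x₂,…) = (…,y₂,y₁,x₁ | x₂,x₃,…)`. -/
def sigmaHat {M : Type*} (p : (ℕ → M) × (ℕ → M)) : (ℕ → M) × (ℕ → M) :=
  (cons (p.2 0) p.1, shift p.2)

/-- The inverse `σ̂⁻¹` of the two-sided shift,
`σ̂⁻¹(…,y₂,y₁ | x₁,x₂,…) = (…,y₃,y₂ | y₁,x₁,x₂,…)`. -/
def sigmaHatInv {M : Type*} (p : (ℕ → M) × (ℕ → M)) : (ℕ → M) × (ℕ → M) :=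
  (shift p.1, cons (p.1 0) p.2)

/-!
Integrating the cohomological equation `A⁻ = A ∘ σ̂⁻¹ + W ∘ σ̂⁻¹ - W` against an invariant measure
cancels the two `W` terms, which is (1). Exchanging past and future conjugates `σ̂` to `σ̂⁻¹`, so
the image of `μ̂` under the exchange is again invariant; (2) is (1) for this reversed measure, whose
two projections are those of `μ̂` swapped.
-/

open Filter Topology

section Coboundary

variable {α E : Type*} [MeasurableSpace α] [NormedAddCommGroup E] [NormedSpace ℝ E]
  {μ : Measure α}

lemma integral_comp_of_measurePreserving {β : Type*} [MeasurableSpace β] {ν : Measure β} {S : α → β}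
    {g : β → E} (hS : MeasurePreserving S μ ν) (hg : AEStronglyMeasurable g ν) :
    ∫ a, g (S a) ∂μ = ∫ b, g b ∂ν := by
  rw [← hS.map_eq] at hg ⊢
  exact (integral_map hS.aemeasurable hg).symm

lemma integral_comp_add_coboundary {T : α → α} {f W : α → E} (hT : MeasurePreserving T μ μ)
    (hf : Integrable f μ) (hW : Integrable W μ) :
    ∫ a, (f (T a) + W (T a) - W a) ∂μ = ∫ a, f a ∂μ := by
  have hfT : Integrable (fun a => f (T a)) μ := hT.integrable_comp_of_integrable hf
  have hWT : Integrable (fun a => W (T a)) μ := hT.integrable_comp_of_integrable hW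
  have hsum : Integrable (fun a => f (T a) + W (T a)) μ := hfT.add hWT
  rw [integral_sub hsum hW, integral_add hfT hWT,
    integral_comp_of_measurePreserving hT hf.aestronglyMeasurable,
    integral_comp_of_measurePreserving hT hW.aestronglyMeasurable, add_sub_cancel_right]

end Coboundary

section Shift

variable {M : Type*}

lemma cons_zero_shift (x : ℕ → M) : cons (x 0) (shift x) = x := by
  funext n
  cases n <;> rfl

lemma sigmaHatInv_sigmaHat (p : (ℕ → M) × (ℕ → M)) : sigmaHatInv (sigmaHat p) = p :=
  Prod.ext rfl (cons_zero_shift p.2)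

lemma sigmaHat_sigmaHatInv (p : (ℕ → M) × (ℕ → M)) : sigmaHat (sigmaHatInv p) = p :=
  Prod.ext (cons_zero_shift p.1) rfl

lemma semiconj_swap_sigmaHat_sigmaHatInv :
    Function.Semiconj Prod.swap (sigmaHat (M := M)) sigmaHatInv :=
  fun _ => rfl

variable [MeasurableSpace M]

lemma measurable_shift : Measurable (shift (M := M)) :=
  measurable_pi_lambda _ fun n => measurable_pi_apply (n + 1)

lemma measurable_cons : Measurable fun p : M × (ℕ → M) => cons p.1 p.2 := by
  refine measurable_pi_lambda _ fun n => ?_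
  cases n with
  | zero => exact measurable_fst
  | succ n => exact (measurable_pi_apply n).comp measurable_snd

lemma measurable_sigmaHat : Measurable (sigmaHat (M := M)) :=
  have hhead : Measurable fun p : (ℕ → M) × (ℕ → M) => p.2 0 :=
    (measurable_pi_apply 0).comp measurable_snd
  (measurable_cons.comp (hhead.prodMk measurable_fst)).prodMk (measurable_shift.comp measurable_snd)

lemma measurable_sigmaHatInv : Measurable (sigmaHatInv (M := M)) :=
  measurable_swap.comp (measurable_sigmaHat.comp measurable_swap)

/-- The two-sided shift `σ̂` as a measurable automorphism of `Ω̂`; it transfers invariance from `σ̂`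
to `σ̂⁻¹`. -/
def sigmaHatEquiv : (ℕ → M) × (ℕ → M) ≃ᵐ (ℕ → M) × (ℕ → M) where
  toFun := sigmaHat
  invFun := sigmaHatInv
  left_inv := sigmaHatInv_sigmaHat
  right_inv := sigmaHat_sigmaHatInv
  measurable_toFun := measurable_sigmaHat
  measurable_invFun := measurable_sigmaHatInv

variable {μ : Measure ((ℕ → M) × (ℕ → M))}

lemma measurePreserving_sigmaHatInv (h : MeasurePreserving sigmaHat μ μ) :
    MeasurePreserving sigmaHatInv μ μ :=
  MeasurePreserving.symm sigmaHatEquiv h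

lemma measurePreserving_sigmaHatInv_map_swap (h : MeasurePreserving sigmaHat μ μ) :
    MeasurePreserving sigmaHatInv (μ.map Prod.swap) (μ.map Prod.swap) :=
  (measurable_swap.measurePreserving μ).of_semiconj h semiconj_swap_sigmaHat_sigmaHatInv
    measurable_sigmaHatInv

end Shift

section InvolutionKernel

/-- `W` is an involution kernel for `A` with dual potential `B`: the function
`A ∘ σ̂⁻¹ + W ∘ σ̂⁻¹ - W` on `Ω̂` depends only on the past `y`, and `B` is that function on `Ω⁻`.
The potential `A` is read on `Ω̂` through the future `x`. -/
def IsInvolutionKernel {M E : Type*} [AddCommGroup E] (W : (ℕ → M) × (ℕ → M) → E)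
    (A B : (ℕ → M) → E) : Prop :=
  ∀ p : (ℕ → M) × (ℕ → M), B p.1 = A (sigmaHatInv p).2 + W (sigmaHatInv p) - W p

variable {M E : Type*} [MeasurableSpace M] [NormedAddCommGroup E]
  {W : (ℕ → M) × (ℕ → M) → E} {A B : (ℕ → M) → E}

lemma IsInvolutionKernel.stronglyMeasurable (h : IsInvolutionKernel W A B)
    (hA : StronglyMeasurable A) (hW : StronglyMeasurable W) : StronglyMeasurable B := by
  rcases isEmpty_or_nonempty (ℕ → M) with _ | ⟨⟨x⟩⟩
  · exact .of_subsingleton_dom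
  · have hsection : Measurable fun y : ℕ → M => (y, x) := measurable_prodMk_right
    have hinv := measurable_sigmaHatInv.comp hsection
    have hB : B = fun y => A (sigmaHatInv (y, x)).2 + W (sigmaHatInv (y, x)) - W (y, x) :=
      funext fun y => h (y, x)
    rw [hB]
    exact ((hA.comp_measurable (measurable_snd.comp hinv)).add (hW.comp_measurable hinv)).sub
      (hW.comp_measurable hsection)

variable [NormedSpace ℝ E] {μ : Measure ((ℕ → M) × (ℕ → M))}

lemma IsInvolutionKernel.integral_map_snd_eq_integral_map_fst (h : IsInvolutionKernel W A B)
    (hμ : MeasurePreserving sigmaHatInv μ μ) (hB : AEStronglyMeasurable B (μ.map Prod.fst))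
    (hA : Integrable A (μ.map Prod.snd)) (hW : Integrable W μ) :
    ∫ x, A x ∂(μ.map Prod.snd) = ∫ y, B y ∂(μ.map Prod.fst) := by
  calc ∫ x, A x ∂(μ.map Prod.snd)
      = ∫ p, A p.2 ∂μ := integral_map measurable_snd.aemeasurable hA.aestronglyMeasurable
    _ = ∫ p, (A (sigmaHatInv p).2 + W (sigmaHatInv p) - W p) ∂μ :=
        (integral_comp_add_coboundary hμ (hA.comp_measurable measurable_snd) hW).symm
    _ = ∫ p, B p.1 ∂μ := integral_congr_ae (.of_forall fun p => (h p).symm)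
    _ = ∫ y, B y ∂(μ.map Prod.fst) := (integral_map measurable_fst.aemeasurable hB).symm

theorem statement17_general (hμ : MeasurePreserving sigmaHat μ μ) (h : IsInvolutionKernel W A B)
    (hA : StronglyMeasurable A) (hA_snd : Integrable A (μ.map Prod.snd))
    (hA_fst : Integrable A (μ.map Prod.fst)) (hW : StronglyMeasurable W)
    (hWμ : Integrable W μ) (hW_swap : Integrable W (μ.map Prod.swap)) :
    ∫ x, A x ∂(μ.map Prod.snd) = ∫ y, B y ∂(μ.map Prod.fst) ∧
      ∫ x, B x ∂(μ.map Prod.snd) = ∫ y, A y ∂(μ.map Prod.fst) := by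
  have hB := h.stronglyMeasurable hA hW
  have snd_swap : (μ.map Prod.swap).map Prod.snd = μ.map Prod.fst :=
    Measure.map_map measurable_snd measurable_swap
  have fst_swap : (μ.map Prod.swap).map Prod.fst = μ.map Prod.snd :=
    Measure.map_map measurable_fst measurable_swap
  have reversed := h.integral_map_snd_eq_integral_map_fst
    (measurePreserving_sigmaHatInv_map_swap hμ) hB.aestronglyMeasurable
    (snd_swap.symm ▸ hA_fst) hW_swap
  rw [snd_swap, fst_swap] at reversed
  exact ⟨h.integral_map_snd_eq_integral_map_fst (measurePreserving_sigmaHatInv hμ)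
    hB.aestronglyMeasurable hA_snd hWμ, reversed.symm⟩

end InvolutionKernel

section Lipschitz

lemma continuous_of_dist_le {X Y : Type*} [TopologicalSpace X] [PseudoMetricSpace Y] {f : X → Y}
    {ρ : X → X → ℝ} (hρ : ∀ q, Tendsto (fun p => ρ p q) (𝓝 q) (𝓝 0))
    (hf : ∀ p q, dist (f p) (f q) ≤ ρ p q) : Continuous f :=
  continuous_iff_continuousAt.2 fun q =>
    tendsto_iff_dist_tendsto_zero.2 (squeeze_zero (fun _ => dist_nonneg) (fun p => hf p q) (hρ q))

variable {M : Type*} [MetricSpace M]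

lemma dOmega_self (x : ℕ → M) : dOmega x x = 0 := by
  simp [dOmega]

lemma continuous_dOmega_left [BoundedSpace M] (y : ℕ → M) :
    Continuous fun x : ℕ → M => dOmega x y := by
  have hsum : Summable fun i : ℕ => (1 / 2 : ℝ) ^ (i + 1) * Metric.diam (Set.univ : Set M) :=
    ((summable_nat_add_iff 1).2 summable_geometric_two).mul_right _
  refine continuous_tsum (fun i => by fun_prop) hsum fun i x => ?_
  rw [Real.norm_of_nonneg (by positivity)]
  gcongr
  exact Metric.dist_le_diam_of_mem (Bornology.IsBounded.all _) (Set.mem_univ _) (Set.mem_univ _)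

lemma tendsto_dOmega_nhds_self [BoundedSpace M] (y : ℕ → M) :
    Tendsto (fun x => dOmega x y) (𝓝 y) (𝓝 0) :=
  (continuous_dOmega_left y).tendsto' y 0 (dOmega_self y)

lemma LipOmega.continuous [BoundedSpace M] {A : (ℕ → M) → ℝ} (hA : LipOmega A) :
    Continuous A := by
  obtain ⟨K, hK⟩ := hA
  refine continuous_of_dist_le (ρ := fun x y => K * dOmega x y) (fun y => ?_) hK
  simpa only [mul_zero] using (tendsto_dOmega_nhds_self y).const_mul K

lemma LipOmegaHat.continuous [BoundedSpace M] {W : (ℕ → M) × (ℕ → M) → ℝ}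
    (hW : LipOmegaHat W) : Continuous W := by
  obtain ⟨K, hK⟩ := hW
  refine continuous_of_dist_le (ρ := fun p q => K * (dOmega p.1 q.1 + dOmega p.2 q.2))
    (fun q => ?_) hK
  have hfst : Tendsto (fun p => dOmega p.1 q.1) (𝓝 q) (𝓝 0) :=
    (tendsto_dOmega_nhds_self q.1).comp (continuous_fst.tendsto q)
  have hsnd : Tendsto (fun p => dOmega p.2 q.2) (𝓝 q) (𝓝 0) :=
    (tendsto_dOmega_nhds_self q.2).comp (continuous_snd.tendsto q)
  simpa only [add_zero, mul_zero] using (hfst.add hsnd).const_mul K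

lemma integrable_of_continuous {X E : Type*} [TopologicalSpace X] [CompactSpace X]
    [MeasurableSpace X] [OpensMeasurableSpace X] [NormedAddCommGroup E] {f : X → E}
    (hf : Continuous f) (μ : Measure X) [IsFiniteMeasureOnCompacts μ] : Integrable f μ :=
  hf.integrable_of_hasCompactSupport (.of_compactSpace f)

end Lipschitz

/-- let `μ̂` be a `σ̂`-invariant probability on `Ω̂ = Ω⁻ × Ω⁺`, with projections
`μ` on `Ω⁺` and `μ⁻` on `Ω⁻`.  Let `A : Ω⁺ → ℝ` and `W : Ω̂ → ℝ` be Lipschitz and suppose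
`A⁻ := A∘σ̂⁻¹ + W∘σ̂⁻¹ − W` depends only on the `y`-coordinates.  Then
(1) `∫ A dμ = ∫ A⁻ dμ⁻`, and (2) `∫ A⁻∘θ⁻¹ dμ = ∫ A∘θ dμ⁻`, where the conjugation
`θ : Ω⁻ → Ω⁺` is the identity in this presentation. -/
theorem statement17 {M : Type*}
    [MetricSpace M] [CompactSpace M] [MeasurableSpace M] [BorelSpace M]
    (μhat : Measure ((ℕ → M) × (ℕ → M))) [IsProbabilityMeasure μhat]
    (hinv : μhat.map sigmaHat = μhat)
    (A : (ℕ → M) → ℝ) (hA : LipOmega A)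
    (W : (ℕ → M) × (ℕ → M) → ℝ) (hW : LipOmegaHat W)
    (Aminus : (ℕ → M) → ℝ)
    (hAminus : ∀ p : (ℕ → M) × (ℕ → M),
      Aminus p.1 = A ((sigmaHatInv p).2) + W (sigmaHatInv p) - W p) :
    (∫ x, A x ∂(μhat.map Prod.snd)) = (∫ y, Aminus y ∂(μhat.map Prod.fst))
    ∧ (∫ x, Aminus x ∂(μhat.map Prod.snd)) = (∫ y, A y ∂(μhat.map Prod.fst)) := by
  have hAc := hA.continuous
  have hWc := hW.continuous
  exact statement17_general ⟨measurable_sigmaHat, hinv⟩ hAminus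
    hAc.stronglyMeasurable (integrable_of_continuous hAc _) (integrable_of_continuous hAc _)
    hWc.stronglyMeasurable (integrable_of_continuous hWc _) (integrable_of_continuous hWc _)

end
end
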